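/- arXiv:2511.04250 — 6 statements merged into one kernel-verified Lean document; each statement's English description precedes it below -/
import Mathlib

section
/- For every real number δ with 0 < δ < 1 there exists N ∈ ℕ such that for all n ≥ N there is an invertible matrix M over 𝔽₂ of size 2n × 2n with the property that every n × n submatrix of M (obtained by selecting n rows and n columns via injective index maps r, c : Fin n → Fin (2n)) has rank at least (1 − δ)·n over 𝔽₂. -/
/-!
Choose `M` uniformly at random among all `m × m` matrices over a field with `q` elements. A matrix
of rank `s` is determined by the position of `s` linearly independent columns, their entries, and
the coefficients of the other columns over them, so a random `n × n` matrix has rank at most `s`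
with probability at most `2 ^ n / q ^ ((n - s) ^ 2)`. An `n × n` submatrix of `M` is itself uniform,
hence a union bound over the at most `m ^ (2 * n)` submatrices shows that one of them has rank at
most `s` with probability at most `m ^ (2 * n) * 2 ^ n / q ^ ((n - s) ^ 2)`. For `m = O(n)` and
`n - s ≥ δ * n` this is eventually smaller than `q ^ (-m)`, whereas `M` is invertible with
probability at least `q ^ (-m)`.
-/

open Finset Matrix

section Density

lemma dens_biUnion_le_card_mul {α β : Type*} [Fintype β] [DecidableEq β] {s : Finset α}
    {t : α → Finset β} {b : ℚ≥0} (h : ∀ a ∈ s, (t a).dens ≤ b) :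
    (s.biUnion t).dens ≤ #s * b :=
  dens_biUnion_le.trans <| (sum_le_card_nsmul s _ b h).trans_eq (nsmul_eq_mul _ _)

lemma dens_filter_comp_of_surjective {G H : Type*} [AddGroup G] [AddGroup H] [Fintype G]
    [Fintype H] {f : G →+ H} (hf : Function.Surjective f) (p : H → Prop)
    [DecidablePred p] : ({g | p (f g)} : Finset G).dens = ({h | p h} : Finset H).dens := by
  classical
  let fiberCard : ℕ := #{g | f g = 0}
  have card_fiber (h : H) : #{g | f g = h} = fiberCard :=
    AddMonoidHom.card_fiber_eq_of_mem_range f (hf h) (hf 0)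
  have card_preimage (p : H → Prop) [DecidablePred p] :
      #{g | p (f g)} = #{h | p h} * fiberCard := by
    rw [card_eq_sum_card_fiberwise (f := f) (t := {h | p h}) (by intro g; simp),
      sum_const_nat fun h hh ↦ ?_]
    rw [← card_fiber h, filter_filter]
    congr 1
    ext g
    simp only [mem_filter, mem_univ, true_and] at hh ⊢
    exact and_iff_right_of_imp fun hg ↦ hg ▸ hh
  have card_eq : Fintype.card G = Fintype.card H * fiberCard := by
    simpa using card_preimage fun _ ↦ True
  have fiberCard_ne_zero : (fiberCard : ℚ≥0) ≠ 0 :=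
    Nat.cast_ne_zero.2 (card_ne_zero.2 ⟨0, by simp⟩)
  rw [dens_eq_card_div_card, dens_eq_card_div_card, card_preimage, card_eq, Nat.cast_mul,
    Nat.cast_mul, mul_div_mul_right _ _ fiberCard_ne_zero]

end Density

section Submatrix

variable {F ι κ μ ν : Type*} {r : ι → μ} {c : κ → ν}

lemma submatrix_surjective [Nonempty F] (hr : r.Injective) (hc : c.Injective) :
    Function.Surjective fun M : Matrix μ ν F ↦ M.submatrix r c := by
  intro A
  obtain ⟨M, hM⟩ := (hr.prodMap hc).surjective_comp_right (Function.uncurry A)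
  exact ⟨of (Function.curry M), by ext i j; exact congrFun hM (i, j)⟩

variable [Fintype F] [Fintype ι] [Fintype κ] [Fintype μ] [Fintype ν]
  [DecidableEq ι] [DecidableEq κ] [DecidableEq μ] [DecidableEq ν]

lemma dens_filter_submatrix [AddGroup F] (hr : r.Injective) (hc : c.Injective)
    (p : Matrix ι κ F → Prop) [DecidablePred p] :
    ({M | p (M.submatrix r c)} : Finset (Matrix μ ν F)).dens =
      ({A | p A} : Finset (Matrix ι κ F)).dens :=
  dens_filter_comp_of_surjective
    (f := AddMonoidHom.mk' (fun M : Matrix μ ν F ↦ M.submatrix r c) fun _ _ ↦ rfl)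
    (submatrix_surjective hr hc) p

end Submatrix

lemma card_matrix {F ι κ : Type*} [Fintype F] [Fintype ι] [Fintype κ] [DecidableEq ι]
    [DecidableEq κ] :
    Fintype.card (Matrix ι κ F) = Fintype.card F ^ (Fintype.card ι * Fintype.card κ) := by
  rw [← Fintype.card_prod, ← Fintype.card_fun]
  exact Fintype.card_congr (Equiv.curry ι κ F).symm

section LowRank

variable {F ι κ : Type*} [Field F]

lemma exists_finset_card_eq_rank_and_forall_col_mem_span [Fintype κ] (A : Matrix ι κ F) :
    ∃ S : Finset κ, #S = A.rank ∧
      ∀ j, A.col j ∈ Submodule.span F (Set.range fun s : S ↦ A.col s) := by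
  classical
  obtain ⟨τ, a, ha, hspan, hli⟩ := exists_linearIndependent' F A.col
  have : Fintype τ := Fintype.ofInjective a ha
  refine ⟨univ.image a, ?_, fun j ↦ ?_⟩
  · rw [card_image_of_injective _ ha, rank_eq_finrank_span_cols, ← hspan,
      finrank_span_eq_card hli, card_univ]
  · have hrange : Set.range (fun s : univ.image a ↦ A.col s) = Set.range (A.col ∘ a) := by
      ext v
      simp
    rw [hrange, hspan]
    exact Submodule.subset_span ⟨j, rfl⟩

variable [DecidableEq κ]

/-- The matrix with columns `B` at the positions in `S` and, at the remaining positions, the linear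
combinations of the columns of `B` with coefficients `C`, where `p = (B, C)`. It parametrizes the
matrices whose columns are spanned by those in `S`. -/
def extendCols (S : Finset κ) (p : Matrix ι S F × Matrix S {j // j ∉ S} F) : Matrix ι κ F :=
  (fromCols p.1 (p.1 * p.2)).submatrix id (Equiv.sumCompl (· ∈ S)).symm

variable [Fintype κ]

lemma exists_extendCols_eq (A : Matrix ι κ F) :
    ∃ S : Finset κ, #S = A.rank ∧ ∃ p, extendCols S p = A := by
  obtain ⟨S, hcard, hspan⟩ := exists_finset_card_eq_rank_and_forall_col_mem_span A
  choose c hc using fun j ↦ (Submodule.mem_span_range_iff_exists_fun F).1 (hspan j)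
  refine ⟨S, hcard, (A.submatrix id (↑), of fun s j ↦ c j s), ?_⟩
  ext i j
  by_cases hj : j ∈ S
  · simp [extendCols, hj]
  · simpa [extendCols, hj, mul_apply, mul_comm] using congrFun (hc j) i

variable [Fintype F] [Fintype ι] [DecidableEq ι]

lemma dens_image_extendCols_le [DecidableEq F] {S : Finset κ} (hS : #S ≤ Fintype.card ι) :
    (univ.image (extendCols (F := F) (ι := ι) S)).dens ≤
      ((Fintype.card F : ℚ≥0) ^ ((Fintype.card ι - #S) * (Fintype.card κ - #S)))⁻¹ := by
  have card_image : #(univ.image (extendCols (F := F) (ι := ι) S)) ≤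
      Fintype.card F ^ (Fintype.card ι * #S + #S * (Fintype.card κ - #S)) := by
    refine card_image_le.trans_eq ?_
    rw [card_univ, Fintype.card_prod, card_matrix, card_matrix, Fintype.card_subtype_compl,
      Fintype.card_coe, pow_add]
  have exponent_eq : Fintype.card ι * #S + #S * (Fintype.card κ - #S) +
      (Fintype.card ι - #S) * (Fintype.card κ - #S) = Fintype.card ι * Fintype.card κ := by
    obtain ⟨a, ha⟩ := Nat.exists_eq_add_of_le hS
    obtain ⟨b, hb⟩ := Nat.exists_eq_add_of_le (card_le_univ S)
    rw [ha, hb, Nat.add_sub_cancel_left, Nat.add_sub_cancel_left]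
    ring
  rw [dens_eq_card_div_card, card_matrix, ← exponent_eq, pow_add, Nat.cast_mul, ← div_div,
    ← Nat.cast_pow, ← one_div]
  gcongr
  exact div_le_one_of_le₀ (Nat.cast_le.2 card_image) (Nat.cast_nonneg _)

/-- The subtractions truncate: once `s` reaches `card ι` or `card κ`, the bound is trivial. -/
lemma dens_rank_le_le (s : ℕ) :
    ({A | A.rank ≤ s} : Finset (Matrix ι κ F)).dens ≤
      2 ^ Fintype.card κ *
        ((Fintype.card F : ℚ≥0) ^ ((Fintype.card ι - s) * (Fintype.card κ - s)))⁻¹ := by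
  classical
  let T : Finset (Finset κ) := {S | #S ≤ Fintype.card ι ∧ #S ≤ s}
  have subset_biUnion : ({A | A.rank ≤ s} : Finset (Matrix ι κ F)) ⊆
      T.biUnion fun S ↦ univ.image (extendCols S) := by
    intro A hA
    obtain ⟨S, hcard, p, hp⟩ := exists_extendCols_eq A
    simp only [mem_filter, mem_univ, true_and, T, mem_biUnion, mem_image] at hA ⊢
    exact ⟨S, ⟨hcard ▸ A.rank_le_card_height, hcard ▸ hA⟩, p, hp⟩
  have card_T_le : (#T : ℚ≥0) ≤ 2 ^ Fintype.card κ :=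
    mod_cast (card_le_univ T).trans_eq Fintype.card_finset
  refine (dens_le_dens subset_biUnion).trans <| (dens_biUnion_le_card_mul fun S hS ↦ ?_).trans <|
    mul_le_mul_left card_T_le _
  obtain ⟨hSι, hSs⟩ : #S ≤ Fintype.card ι ∧ #S ≤ s := by simpa [T] using hS
  refine (dens_image_extendCols_le hSι).trans ?_
  gcongr
  exact mod_cast Fintype.card_pos

end LowRank

section Invertible

lemma pow_le_mul_pow_sub_pow {q i m : ℕ} (hq : 1 < q) (hi : i < m) :
    q ^ m ≤ q * (q ^ m - q ^ i) := by
  have h_succ : q * q ^ i ≤ q ^ m := by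
    rw [← pow_succ']
    exact Nat.pow_le_pow_right hq.le hi
  have h_two : 2 * q ^ m ≤ q * q ^ m := Nat.mul_le_mul_right _ hq
  rw [Nat.mul_sub]
  lia

variable {F : Type*} [Field F] [Fintype F]

open scoped Classical in
lemma card_filter_isUnit (m : ℕ) :
    #({M | IsUnit M} : Finset (Matrix (Fin m) (Fin m) F)) =
      ∏ i : Fin m, (Fintype.card F ^ m - Fintype.card F ^ (i : ℕ)) := by
  rw [← card_GL_field, ← Fintype.card_subtype, ← Nat.card_eq_fintype_card]
  exact Nat.card_congr Submonoid.unitsTypeEquivIsUnitSubmonoid.toEquiv.symm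

open scoped Classical in
lemma inv_card_pow_le_dens_isUnit (m : ℕ) :
    ((Fintype.card F : ℚ≥0) ^ m)⁻¹ ≤
      ({M | IsUnit M} : Finset (Matrix (Fin m) (Fin m) F)).dens := by
  have card_matrix_le : Fintype.card (Matrix (Fin m) (Fin m) F) ≤
      Fintype.card F ^ m * #({M | IsUnit M} : Finset (Matrix (Fin m) (Fin m) F)) :=
    calc Fintype.card (Matrix (Fin m) (Fin m) F) = ∏ _i : Fin m, Fintype.card F ^ m := by
          simp [card_matrix, pow_mul]
      _ ≤ ∏ i : Fin m, Fintype.card F * (Fintype.card F ^ m - Fintype.card F ^ (i : ℕ)) :=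
          prod_le_prod' fun i _ ↦ pow_le_mul_pow_sub_pow Fintype.one_lt_card i.isLt
      _ = Fintype.card F ^ m * #({M | IsUnit M} : Finset (Matrix (Fin m) (Fin m) F)) := by
          rw [prod_mul_distrib, card_filter_isUnit, prod_const, card_univ, Fintype.card_fin]
  rw [dens_eq_card_div_card, le_div_iff₀ (Nat.cast_pos.2 Fintype.card_pos),
    inv_mul_le_iff₀ (pow_pos (Nat.cast_pos.2 Fintype.card_pos) m)]
  exact mod_cast card_matrix_le

end Invertible

section UnionBound

variable {F ι κ : Type*} [Field F] [Fintype F] [Fintype ι] [Fintype κ]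

open scoped Classical in
lemma dens_exists_submatrix_rank_le_le {μ ν : Type*} [Fintype μ] [Fintype ν] [DecidableEq μ]
    [DecidableEq ν] (s : ℕ) :
    ({M | ∃ (r : ι ↪ μ) (c : κ ↪ ν), (M.submatrix r c).rank ≤ s} :
        Finset (Matrix μ ν F)).dens ≤
      (Fintype.card μ ^ Fintype.card ι * Fintype.card ν ^ Fintype.card κ) *
        (2 ^ Fintype.card κ *
          ((Fintype.card F : ℚ≥0) ^ ((Fintype.card ι - s) * (Fintype.card κ - s)))⁻¹) := by
  have eq_biUnion : ({M | ∃ (r : ι ↪ μ) (c : κ ↪ ν), (M.submatrix r c).rank ≤ s} :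
      Finset (Matrix μ ν F)) = (univ : Finset ((ι ↪ μ) × (κ ↪ ν))).biUnion
        fun p ↦ {M | (M.submatrix p.1 p.2).rank ≤ s} := by
    ext M
    simp
  have card_pairs_le : (#(univ : Finset ((ι ↪ μ) × (κ ↪ ν))) : ℚ≥0) ≤
      Fintype.card μ ^ Fintype.card ι * Fintype.card ν ^ Fintype.card κ := by
    rw [card_univ, Fintype.card_prod, Fintype.card_embedding_eq, Fintype.card_embedding_eq]
    exact mod_cast Nat.mul_le_mul (Nat.descFactorial_le_pow _ _) (Nat.descFactorial_le_pow _ _)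
  rw [eq_biUnion]
  refine (dens_biUnion_le_card_mul fun p _ ↦ ?_).trans (mul_le_mul_left card_pairs_le _)
  rw [dens_filter_submatrix p.1.injective p.2.injective fun A ↦ A.rank ≤ s]
  exact dens_rank_le_le s

lemma exists_isUnit_forall_lt_rank_submatrix {m s : ℕ}
    (h : m ^ Fintype.card ι * m ^ Fintype.card κ * 2 ^ Fintype.card κ * Fintype.card F ^ m <
      Fintype.card F ^ ((Fintype.card ι - s) * (Fintype.card κ - s))) :
    ∃ M : Matrix (Fin m) (Fin m) F, IsUnit M ∧
      ∀ (r : ι → Fin m) (c : κ → Fin m), r.Injective → c.Injective →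
        s < (M.submatrix r c).rank := by
  classical
  by_contra! hbad
  have units_subset : ({M | IsUnit M} : Finset (Matrix (Fin m) (Fin m) F)) ⊆
      ({M | ∃ (r : ι ↪ Fin m) (c : κ ↪ Fin m), (M.submatrix r c).rank ≤ s} :
        Finset (Matrix (Fin m) (Fin m) F)) := by
    intro M hM
    obtain ⟨r, c, hr, hc, hrank⟩ := hbad M (mem_filter.1 hM).2
    exact mem_filter.2 ⟨mem_univ M, ⟨r, hr⟩, ⟨c, hc⟩, hrank⟩
  have density_le := (inv_card_pow_le_dens_isUnit m).trans <|
    (dens_le_dens units_subset).trans (dens_exists_submatrix_rank_le_le s)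
  have hq : (0 : ℚ≥0) < Fintype.card F := Nat.cast_pos.2 Fintype.card_pos
  rw [← mul_assoc, ← div_eq_mul_inv, inv_le_iff_one_le_mul₀ (by positivity), div_mul_eq_mul_div,
    one_le_div (by positivity), Fintype.card_fin] at density_le
  exact h.not_ge (mod_cast density_le)

end UnionBound

lemma eventually_pow_lt_pow_mul_self {q : ℕ} (hq : 1 < q) (k : ℕ) {ε : ℝ} (hε : 0 < ε) :
    ∀ᶠ n : ℕ in Filter.atTop, ∀ d : ℕ, ε * n ≤ d →
      (k * n) ^ n * (k * n) ^ n * 2 ^ n * q ^ (k * n) < q ^ (d * d) := by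
  have hq' : (1 : ℝ) < q := mod_cast hq
  -- Both sides are essentially `n`-th powers, of `C * n ^ 2` and of `b ^ n`.
  let b : ℝ := (q : ℝ) ^ (ε ^ 2)
  let C : ℝ := k ^ 2 * 2 * q ^ k
  have hb : 1 < b := Real.one_lt_rpow hq' (by positivity)
  have poly_div_exp_lt : ∀ᶠ n : ℕ in Filter.atTop, C * ((n : ℝ) ^ 2 / b ^ n) < 1 :=
    ((tendsto_pow_const_div_const_pow_of_one_lt 2 hb).const_mul C).eventually_lt_const (by simp)
  filter_upwards [poly_div_exp_lt, Filter.eventually_ne_atTop 0] with n hn hn0 d hd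
  have base_lt : C * n ^ 2 < b ^ n := by
    rwa [← mul_div_assoc, div_lt_one (by positivity)] at hn
  suffices (((k * n) ^ n * (k * n) ^ n * 2 ^ n * q ^ (k * n) : ℕ) : ℝ) < (q ^ (d * d) : ℕ) from
    mod_cast this
  calc (((k * n) ^ n * (k * n) ^ n * 2 ^ n * q ^ (k * n) : ℕ) : ℝ) = (C * n ^ 2) ^ n := by
        simp only [C]
        push_cast
        ring
    _ < (b ^ n) ^ n := pow_lt_pow_left₀ base_lt (by positivity) hn0
    _ = (q : ℝ) ^ ((ε * n) * (ε * n)) := by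
        rw [← pow_mul, ← Real.rpow_natCast, ← Real.rpow_mul (by positivity)]
        push_cast
        ring_nf
    _ ≤ (q : ℝ) ^ ((d : ℝ) * d) := by
        gcongr
        exact hq'.le
    _ = (q ^ (d * d) : ℕ) := by
        rw [← Nat.cast_mul, Real.rpow_natCast, Nat.cast_pow]

theorem statement0_general (F : Type*) [Field F] [Finite F] (k : ℕ) {δ : ℝ} (hδ0 : 0 < δ)
    (hδ1 : δ < 1) :
    ∀ᶠ n : ℕ in Filter.atTop, ∃ M : Matrix (Fin (k * n)) (Fin (k * n)) F, IsUnit M ∧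
      ∀ r c : Fin n → Fin (k * n), Function.Injective r → Function.Injective c →
        (1 - δ) * n ≤ ((M.submatrix r c).rank : ℝ) := by
  have := Fintype.ofFinite F
  filter_upwards [eventually_pow_lt_pow_mul_self (Fintype.one_lt_card (α := F)) k hδ0] with n hn
  let s : ℕ := ⌊(1 - δ) * n⌋₊
  have codim_ge : δ * n ≤ (n - s : ℕ) := by
    have floor_le : (s : ℝ) ≤ (1 - δ) * n :=
      Nat.floor_le (mul_nonneg (sub_nonneg.2 hδ1.le) n.cast_nonneg)
    have le_sub_add : (n : ℝ) ≤ (n - s : ℕ) + s := mod_cast le_tsub_add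
    linarith
  obtain ⟨M, hM, hrank⟩ := exists_isUnit_forall_lt_rank_submatrix (F := F) (ι := Fin n)
    (κ := Fin n) (m := k * n) (s := s) (by simpa only [Fintype.card_fin] using hn _ codim_ge)
  exact ⟨M, hM, fun r c hr hc ↦ (Nat.lt_of_floor_lt (hrank r c hr hc)).le⟩

/-- For every real `δ` with `0 < δ < 1` there exists `N` such that for all `n ≥ N`
there is an invertible `2n × 2n` matrix `M` over `𝔽₂` all of whose `n × n`
submatrices (selected by injective row/column index maps) have rank at least `(1 - δ) * n`. -/
theorem statement0 (δ : ℝ) (hδ0 : 0 < δ) (hδ1 : δ < 1) :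
    ∃ N : ℕ, ∀ n : ℕ, N ≤ n →
      ∃ M : Matrix (Fin (2 * n)) (Fin (2 * n)) (ZMod 2),
        IsUnit M ∧
        ∀ r c : Fin n → Fin (2 * n), Function.Injective r → Function.Injective c →
          (1 - δ) * n ≤ ((M.submatrix r c).rank : ℝ) :=
  Filter.eventually_atTop.1 (statement0_general (ZMod 2) 2 hδ0 hδ1)
end

section
/- For every n ∈ ℕ, four times the number of invertible n × n matrices over 𝔽₂ exceeds 2^{n²}; equivalently, a uniformly random n × n matrix over 𝔽₂ is invertible with probability strictly greater than 1/4. -/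
/-!
Dividing `|GL n F| = ∏ i < n, (q ^ n - q ^ i)` by `q ^ n ^ 2` gives the partial Euler product
`∏ i < n, (1 - x ^ (i + 1))` at `x = q⁻¹`. Multiplying `1 - x - x ^ 2 + x ^ (n + 1)` by
`1 - x ^ (n + 1)` yields `1 - x - x ^ 2 + x ^ (n + 2)` plus a nonnegative error, so by induction the
partial products stay strictly above `1 - x - x ^ 2`, the beginning of Euler's pentagonal series.
At `x = 1 / 2` this bound is `1 / 4`.
-/

section EulerProduct

variable {R : Type*} [CommRing R] [LinearOrder R] [IsStrictOrderedRing R] {x : R}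

theorem one_sub_sub_sq_add_pow_le_prod_one_sub_pow (hx₀ : 0 ≤ x) (hx₁ : x ≤ 1) (n : ℕ) :
    1 - x - x ^ 2 + x ^ (n + 1) ≤ ∏ i ∈ Finset.range n, (1 - x ^ (i + 1)) := by
  rcases n.eq_zero_or_pos with rfl | hn
  · rw [Finset.range_zero, Finset.prod_empty, zero_add, pow_one]
    linarith [sq_nonneg x]
  induction n, hn using Nat.le_induction with
  | base => simp
  | succ n hn ih =>
    have pow_le_sq : x ^ (n + 1) ≤ x ^ 2 := pow_le_pow_of_le_one hx₀ hx₁ (by lia)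
    have error_nonneg : 0 ≤ x ^ (n + 1) * (x ^ 2 - x ^ (n + 1)) :=
      mul_nonneg (pow_nonneg hx₀ _) (sub_nonneg.2 pow_le_sq)
    have factor_nonneg : 0 ≤ 1 - x ^ (n + 1) := sub_nonneg.2 (pow_le_one₀ hx₀ hx₁)
    calc 1 - x - x ^ 2 + x ^ (n + 1 + 1)
        ≤ 1 - x - x ^ 2 + x ^ (n + 1 + 1) + x ^ (n + 1) * (x ^ 2 - x ^ (n + 1)) :=
          le_add_of_nonneg_right error_nonneg
      _ = (1 - x - x ^ 2 + x ^ (n + 1)) * (1 - x ^ (n + 1)) := by ring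
      _ ≤ (∏ i ∈ Finset.range n, (1 - x ^ (i + 1))) * (1 - x ^ (n + 1)) :=
          mul_le_mul_of_nonneg_right ih factor_nonneg
      _ = ∏ i ∈ Finset.range (n + 1), (1 - x ^ (i + 1)) := (Finset.prod_range_succ _ n).symm

theorem one_sub_sub_sq_lt_prod_one_sub_pow (hx₀ : 0 < x) (hx₁ : x ≤ 1) (n : ℕ) :
    1 - x - x ^ 2 < ∏ i ∈ Finset.range n, (1 - x ^ (i + 1)) :=
  (lt_add_of_pos_right _ (pow_pos hx₀ (n + 1))).trans_le
    (one_sub_sub_sq_add_pow_le_prod_one_sub_pow hx₀.le hx₁ n)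

end EulerProduct

theorem prod_pow_sub_pow_eq {K : Type*} [Field K] {q : K} (hq : q ≠ 0) (n : ℕ) :
    ∏ i ∈ Finset.range n, (q ^ n - q ^ i) =
      q ^ n ^ 2 * ∏ i ∈ Finset.range n, (1 - q⁻¹ ^ (i + 1)) := by
  have factor_eq (i : ℕ) (hi : i ∈ Finset.range n) :
      q ^ n - q ^ (n - 1 - i) = q ^ n * (1 - q⁻¹ ^ (i + 1)) := by
    have exponent_eq : n - 1 - i + (i + 1) = n := by
      have := Finset.mem_range.1 hi
      lia
    have pow_eq : q ^ n = q ^ (n - 1 - i) * q ^ (i + 1) := by rw [← pow_add, exponent_eq]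
    rw [mul_sub, mul_one, pow_eq, mul_assoc, ← mul_pow, mul_inv_cancel₀ hq, one_pow, mul_one]
  rw [← Finset.prod_range_reflect, Finset.prod_congr rfl factor_eq, Finset.prod_mul_distrib,
    Finset.prod_const, Finset.card_range, ← pow_mul, sq]

section FiniteField

variable (F : Type*) [Field F] [Fintype F] (n : ℕ)

theorem card_GL_eq_pow_mul_prod_one_sub_pow :
    (Nat.card (GL (Fin n) F) : ℚ) =
      (Fintype.card F : ℚ) ^ n ^ 2 *
        ∏ i ∈ Finset.range n, (1 - (Fintype.card F : ℚ)⁻¹ ^ (i + 1)) := by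
  have pow_le (i : Fin n) : Fintype.card F ^ (i : ℕ) ≤ Fintype.card F ^ n :=
    Nat.pow_le_pow_right Fintype.card_pos i.is_le'
  rw [← prod_pow_sub_pow_eq (Nat.cast_ne_zero.2 Fintype.card_ne_zero), Matrix.card_GL_field,
    Nat.cast_prod, ← Fin.prod_univ_eq_prod_range]
  simp only [Nat.cast_sub (pow_le _), Nat.cast_pow]

theorem statement1_general :
    (1 - (Fintype.card F : ℚ)⁻¹ - (Fintype.card F : ℚ)⁻¹ ^ 2) * (Fintype.card F : ℚ) ^ n ^ 2 <
      Nat.card (GL (Fin n) F) := by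
  have card_pos : (0 : ℚ) < Fintype.card F := Nat.cast_pos.2 Fintype.card_pos
  have inv_le_one : (Fintype.card F : ℚ)⁻¹ ≤ 1 :=
    inv_le_one_of_one_le₀ (Nat.one_le_cast.2 Fintype.card_pos)
  rw [card_GL_eq_pow_mul_prod_one_sub_pow, mul_comm]
  exact mul_lt_mul_of_pos_left
    (one_sub_sub_sq_lt_prod_one_sub_pow (inv_pos.2 card_pos) inv_le_one n) (pow_pos card_pos _)

end FiniteField

/-- Four times the number of invertible `n × n` matrices over `𝔽₂` exceeds `2 ^ (n²)`:
a uniformly random matrix over `𝔽₂` is invertible with probability greater than `1/4`. -/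
theorem statement1 (n : ℕ) :
    2 ^ (n ^ 2) < 4 * Nat.card (GL (Fin n) (ZMod 2)) := by
  have quarter_lt := statement1_general (ZMod 2) n
  rw [ZMod.card, Nat.cast_ofNat] at quarter_lt
  qify
  linarith
end

section
/- Let n ≥ 1 and define the real matrix M of size 2^n × 2^n, indexed by x, y ∈ {0, 1, …, 2^n − 1}, by M(x, y) = 2^{−n} · ∏_{i=1}^{n} t_i(x, y), where t_i(x, y) = cos²(π x / 2^{2n−i}) if y_i = 0 and t_i(x, y) = sin²(π x / 2^{2n−i}) if y_i = 1, and where (y_1, …, y_n) ∈ {0,1}^n are the binary digits of y (with y = Σ_{i=1}^n y_i 2^{i−1}). Then the rank of M over ℝ is at least 2^{n−1}. -/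
open Real Finset

/-!
Since `cos² θ = (1 + cos 2θ) / 2` and `sin² θ = (1 - cos 2θ) / 2`, the entry in row `x` and column
`y` is, up to the constant `4⁻ⁿ`, the value at `cos φₓ`, with `φₓ = 4πx / 4ⁿ`, of the polynomial
`∏_{i<n} (1 ± T_{2^i})`, where `T` is Chebyshev's and the signs are given by the digits of `y`.
Dividing by `T_{2^(n-1)}` and inducting on `n`, these `2^n` products span all polynomials of degree
below `2^n`. The nodes `cos φₓ` are distinct because `φₓ ∈ [0, π]`, so by Lagrange interpolation
the columns span `ℝ^(2^n)`: the matrix is in fact invertible.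
-/

open Polynomial

section SignedProd

variable {R S : Type*} [CommRing R] [CommRing S]

/-- The product `∏_{i<n} (1 ± q i)` whose `i`-th sign is minus exactly when the binary digit of `y`
of weight `2^i` is `1`. As `y` runs over `[0, 2^n)` this gives all `2^n` choices of signs. -/
def signedProd (q : ℕ → R) (n y : ℕ) : R :=
  ∏ i ∈ Finset.range n, if y.testBit i then 1 - q i else 1 + q i

theorem signedProd_succ_of_lt (q : ℕ → R) {n y : ℕ} (hy : y < 2 ^ n) :
    signedProd q (n + 1) y = (1 + q n) * signedProd q n y := by
  simp [signedProd, Finset.prod_range_succ_comm, Nat.testBit_lt_two_pow hy]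

theorem signedProd_succ_two_pow_add (q : ℕ → R) {n y : ℕ} (hy : y < 2 ^ n) :
    signedProd q (n + 1) (2 ^ n + y) = (1 - q n) * signedProd q n y := by
  have lower_bits : ∏ i ∈ Finset.range n, (if (2 ^ n + y).testBit i then 1 - q i else 1 + q i) =
      signedProd q n y :=
    Finset.prod_congr rfl fun i hi => by
      rw [Nat.testBit_two_pow_add_gt (Finset.mem_range.mp hi)]
  rw [signedProd, Finset.prod_range_succ_comm, lower_bits, Nat.testBit_two_pow_add_eq,
    Nat.testBit_lt_two_pow hy, Bool.not_false, if_pos rfl]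

theorem map_signedProd (f : R →+* S) (q : ℕ → R) (n y : ℕ) :
    f (signedProd q n y) = signedProd (fun i => f (q i)) n y := by
  simp only [signedProd, map_prod, apply_ite f, map_sub, map_add, map_one]

theorem mul_mem_span_signedProd_succ {A : Type*} [CommSemiring A] [Algebra A R]
    (q : ℕ → R) {n : ℕ} {p : R}
    (hp : p ∈ Submodule.span A (signedProd q n '' Set.Iio (2 ^ n))) :
    (1 + q n) * p ∈ Submodule.span A (signedProd q (n + 1) '' Set.Iio (2 ^ (n + 1))) ∧
      (1 - q n) * p ∈ Submodule.span A (signedProd q (n + 1) '' Set.Iio (2 ^ (n + 1))) := by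
  set V := Submodule.span A (signedProd q (n + 1) '' Set.Iio (2 ^ (n + 1)))
  suffices Submodule.span A (signedProd q n '' Set.Iio (2 ^ n)) ≤
      V.comap (LinearMap.mulLeft A (1 + q n)) ⊓ V.comap (LinearMap.mulLeft A (1 - q n)) from this hp
  rw [Submodule.span_le]
  rintro _ ⟨y, hy : y < 2 ^ n, rfl⟩
  have mem_V {z : ℕ} (hz : z < 2 ^ n + 2 ^ n) : signedProd q (n + 1) z ∈ V :=
    Submodule.subset_span ⟨z, by rwa [Set.mem_Iio, pow_succ, mul_two], rfl⟩
  constructor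
  · rw [SetLike.mem_coe, Submodule.mem_comap, LinearMap.mulLeft_apply, ← signedProd_succ_of_lt q hy]
    exact mem_V (by omega)
  · rw [SetLike.mem_coe, Submodule.mem_comap, LinearMap.mulLeft_apply,
      ← signedProd_succ_two_pow_add q hy]
    exact mem_V (by omega)

end SignedProd

section Span

variable {K : Type*} [Field K]

theorem degree_div_lt_of_degree_lt_add {p q : K[X]} {m : ℕ} (hq : q ≠ 0)
    (hp : p.degree < q.degree + m) : (p / q).degree < m := by
  rcases lt_or_ge p.degree q.degree with hpq | hqp
  · rw [(Polynomial.div_eq_zero_iff hq).mpr hpq, degree_zero]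
    exact WithBot.bot_lt_coe m
  · rw [← degree_add_div hq hqp] at hp
    exact lt_of_add_lt_add_left hp

theorem degreeLT_le_span_signedProd [NeZero (2 : K)] {q : ℕ → K[X]}
    (hq : ∀ i, (q i).degree = (2 ^ i : ℕ)) (n : ℕ) :
    degreeLT K (2 ^ n) ≤ Submodule.span K (signedProd q n '' Set.Iio (2 ^ n)) := by
  induction n with
  | zero =>
    intro p hp
    have p_const : p = p.coeff 0 • (1 : K[X]) := by
      rw [smul_eq_C_mul, mul_one]
      exact eq_C_of_degree_le_zero (Nat.WithBot.lt_one_iff_le_zero.mp (mem_degreeLT.mp hp))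
    rw [p_const]
    exact Submodule.smul_mem _ _ (Submodule.subset_span ⟨0, by simp, by simp [signedProd]⟩)
  | succ n ih =>
    intro p hp
    have hq0 : q n ≠ 0 := degree_ne_bot.mp (hq n ▸ WithBot.natCast_ne_bot _)
    have quotient_mem : p / q n ∈ degreeLT K (2 ^ n) := by
      refine mem_degreeLT.mpr (degree_div_lt_of_degree_lt_add hq0 ?_)
      rw [hq n, ← Nat.cast_add, ← mul_two, ← pow_succ]
      exact mem_degreeLT.mp hp
    have remainder_mem : p % q n ∈ degreeLT K (2 ^ n) :=
      mem_degreeLT.mpr (hq n ▸ EuclideanDomain.mod_lt p hq0)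
    have sum_mem := (mul_mem_span_signedProd_succ q (ih (add_mem remainder_mem quotient_mem))).1
    have diff_mem := (mul_mem_span_signedProd_succ q (ih (sub_mem remainder_mem quotient_mem))).2
    have decomposition : p = (2⁻¹ : K) • ((1 + q n) * (p % q n + p / q n) +
        (1 - q n) * (p % q n - p / q n)) := by
      rw [eq_inv_smul_iff₀ two_ne_zero, ofNat_smul_eq_nsmul, nsmul_eq_mul]
      linear_combination (-2 : K[X]) * EuclideanDomain.div_add_mod p (q n)
    rw [decomposition]
    exact Submodule.smul_mem _ _ (add_mem sum_mem diff_mem)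

theorem rank_of_eval_eq_card {ι κ : Type*} [Fintype ι] [Fintype κ] {P : κ → K[X]} {u : ι → K}
    (hu : Function.Injective u)
    (hP : degreeLT K (Fintype.card ι) ≤ Submodule.span K (Set.range P)) :
    (Matrix.of fun x y => (P y).eval (u x)).rank = Fintype.card ι := by
  classical
  let evalNodes : K[X] →ₗ[K] ι → K := LinearMap.pi fun x => leval (u x)
  have cols_eq : Set.range (Matrix.of fun x y => (P y).eval (u x)).col =
      evalNodes '' Set.range P := by
    rw [← Set.range_comp]
    rfl
  have span_cols : Submodule.span K (evalNodes '' Set.range P) = ⊤ := by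
    refine Submodule.eq_top_iff'.mpr fun w => ?_
    rw [Submodule.span_image]
    refine ⟨Lagrange.interpolate Finset.univ u w, hP (mem_degreeLT.mpr ?_), ?_⟩
    · exact Lagrange.degree_interpolate_lt w hu.injOn
    · exact funext fun x => Lagrange.eval_interpolate_at_node w hu.injOn (Finset.mem_univ x)
  rw [Matrix.rank_eq_finrank_span_cols, cols_eq, span_cols, finrank_top,
    Module.finrank_fintype_fun_eq_card]

end Span

theorem rank_of_const_mul {R ι κ : Type*} [CommRing R] [IsDomain R] [Fintype κ] {c : R}
    (hc : c ≠ 0) (f : ι → κ → R) : (Matrix.of fun x y => c * f x y).rank = (Matrix.of f).rank :=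
  Matrix.rank_smul_of_mem_nonZeroDivisors (Matrix.of f) (mem_nonZeroDivisors_of_ne_zero hc)

theorem prod_sin_sq_cos_sq_eq_signedProd (θ : ℝ) (n y : ℕ) :
    (∏ i ∈ Finset.range n, if y.testBit i then sin (2 ^ i * θ) ^ 2 else cos (2 ^ i * θ) ^ 2) =
      (2 ^ n)⁻¹ * (signedProd (fun i => Chebyshev.T ℝ (2 ^ i : ℕ)) n y).eval (cos (2 * θ)) := by
  have eval_T (i : ℕ) : (Chebyshev.T ℝ (2 ^ i : ℕ)).eval (cos (2 * θ)) = cos (2 * (2 ^ i * θ)) := by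
    rw [Chebyshev.T_real_cos]
    push_cast
    ring_nf
  rw [← coe_evalRingHom, map_signedProd, signedProd, inv_mul_eq_div,
    Finset.pow_eq_prod_const, ← Finset.prod_div_distrib]
  refine Finset.prod_congr rfl fun i _ => ?_
  rw [coe_evalRingHom, eval_T, sin_sq_eq_half_sub, cos_sq]
  split_ifs <;> ring

theorem rank_prod_sin_sq_cos_sq_eq_card {ι : Type*} [Fintype ι] {n : ℕ}
    (hι : Fintype.card ι ≤ 2 ^ n)
    {θ : ι → ℝ} (hθ : Function.Injective fun x => cos (2 * θ x)) :
    (Matrix.of fun (x : ι) (y : Fin (2 ^ n)) => ∏ i ∈ Finset.range n,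
      if (y : ℕ).testBit i then sin (2 ^ i * θ x) ^ 2 else cos (2 ^ i * θ x) ^ 2).rank =
        Fintype.card ι := by
  let P (y : Fin (2 ^ n)) : ℝ[X] := signedProd (fun i => Chebyshev.T ℝ (2 ^ i : ℕ)) n y
  have range_P : Set.range P =
      signedProd (fun i => Chebyshev.T ℝ (2 ^ i : ℕ)) n '' Set.Iio (2 ^ n) := by
    rw [← Fin.range_val, ← Set.range_comp]
    rfl
  have span_P : degreeLT ℝ (Fintype.card ι) ≤ Submodule.span ℝ (Set.range P) := by
    rw [range_P]
    exact (degreeLT_mono hι).trans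
      (degreeLT_le_span_signedProd (fun i => by rw [Chebyshev.degree_T, Int.natAbs_natCast]) n)
  simp only [prod_sin_sq_cos_sq_eq_signedProd]
  rw [rank_of_const_mul (by positivity)]
  exact rank_of_eval_eq_card hθ span_P

theorem injective_cos_two_mul_node (n : ℕ) :
    Function.Injective fun x : Fin (2 ^ n) => cos (2 * (2 * π * (x : ℕ) / 2 ^ (2 * n))) := by
  have four_mul_le (x : Fin (2 ^ n)) : 4 * ((x : ℕ) : ℝ) ≤ 2 ^ (2 * n) := by
    have hx : ((x : ℕ) : ℝ) + 1 ≤ 2 ^ n := by exact_mod_cast x.isLt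
    calc 4 * ((x : ℕ) : ℝ) ≤ 4 * (2 ^ n - 1) := by linarith
      _ ≤ (2 ^ n) ^ 2 := by linarith [sq_nonneg ((2 : ℝ) ^ n - 2)]
      _ = 2 ^ (2 * n) := (pow_mul' 2 2 n).symm
  have mem_Icc (x : Fin (2 ^ n)) : 2 * (2 * π * ((x : ℕ) : ℝ) / 2 ^ (2 * n)) ∈ Set.Icc 0 π := by
    refine ⟨by positivity, ?_⟩
    calc 2 * (2 * π * ((x : ℕ) : ℝ) / 2 ^ (2 * n))
        = π * (4 * ((x : ℕ) : ℝ) / 2 ^ (2 * n)) := by ring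
      _ ≤ π := mul_le_of_le_one_right pi_nonneg
        (div_le_one_of_le₀ (four_mul_le x) (by positivity))
  intro x y hxy
  have angles_eq := injOn_cos (mem_Icc x) (mem_Icc y) hxy
  have hπ := pi_ne_zero
  field_simp at angles_eq
  exact Fin.ext (by exact_mod_cast angles_eq)

theorem statement3_general (n : ℕ) :
    (Matrix.of (fun x y : Fin (2 ^ n) =>
      (2 ^ n : ℝ)⁻¹ * ∏ i ∈ Finset.range n,
        (if (y : ℕ).testBit i
          then (Real.sin (Real.pi * (x : ℕ) / 2 ^ (2 * n - (i + 1)))) ^ 2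
          else (Real.cos (Real.pi * (x : ℕ) / 2 ^ (2 * n - (i + 1)))) ^ 2))).rank = 2 ^ n := by
  have angle_eq (x : Fin (2 ^ n)) {i : ℕ} (hi : i ∈ Finset.range n) :
      π * (x : ℕ) / 2 ^ (2 * n - (i + 1)) = 2 ^ i * (2 * π * (x : ℕ) / 2 ^ (2 * n)) := by
    have i_lt := Finset.mem_range.mp hi
    have two_pow : (2 : ℝ) ^ (2 * n) = 2 ^ (2 * n - (i + 1)) * 2 ^ i * 2 := by
      rw [← pow_add, ← pow_succ, show 2 * n - (i + 1) + i + 1 = 2 * n by omega]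
    rw [two_pow]
    field_simp
  have prod_eq (x y : Fin (2 ^ n)) := Finset.prod_congr rfl fun i hi =>
    congrArg (fun a => if (y : ℕ).testBit i then sin a ^ 2 else cos a ^ 2) (angle_eq x hi)
  simp only [prod_eq]
  rw [rank_of_const_mul (by positivity),
    rank_prod_sin_sq_cos_sq_eq_card (Fintype.card_fin _).le (injective_cos_two_mul_node n),
    Fintype.card_fin]

/-- The `2^n × 2^n` joint-probability matrix of the distributed-QFT experiment,
`M x y = 2⁻ⁿ ∏_{i=1}^n t_i(x,y)` with `t_i = cos²(π x / 2^{2n-i})` if the `i`-th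
binary digit of `y` is `0` and `sin²(π x / 2^{2n-i})` otherwise, has rank at
least `2^{n-1}` over `ℝ`. -/
theorem statement3 (n : ℕ) (hn : 1 ≤ n) :
    2 ^ (n - 1) ≤
      (Matrix.of (fun x y : Fin (2 ^ n) =>
        (2 ^ n : ℝ)⁻¹ * ∏ i ∈ Finset.range n,
          (if (y : ℕ).testBit i
            then (Real.sin (Real.pi * (x : ℕ) / 2 ^ (2 * n - (i + 1)))) ^ 2
            else (Real.cos (Real.pi * (x : ℕ) / 2 ^ (2 * n - (i + 1)))) ^ 2))).rank := by
  rw [statement3_general]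
  exact Nat.pow_le_pow_right two_pos (Nat.sub_le n 1)
end

section
/- Let n ≥ 1 and define the real matrix M' of size 2^n × 2^n, indexed by x, y ∈ {0, 1, …, 2^n − 1}, by M'(x, y) = ∏_{i=1}^{n} (cos(2π x / 2^{2n−i}))^{y_i}, where (y_1, …, y_n) ∈ {0,1}^n are the binary digits of y (with y = Σ_{i=1}^n y_i 2^{i−1}). Then the rank of M' over ℝ is at least 2^{n−1}. -/
/-!
With `θ = 2πx / 2^(2n-1)`, the `x`-th row consists of the products of the numbers
`cos (2^i θ) = T_{2^i}(cos θ)` over the binary digits `i` of the column index `y`. So the `(x, y)`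
entry is the value at `cos θ` of a product of Chebyshev polynomials, whose degree is
`∑ i, y_i 2^i = y`. Polynomials of degrees `0, 1, …, 2^n - 1` evaluated at `2^n` distinct points
form an invertible matrix: a Vandermonde matrix times a triangular one. The points `cos θ` are
distinct since all the angles lie in `[0, π]`.
-/

open Polynomial

section SequenceEval

variable {m : ℕ}

theorem det_eval_sequence {R : Type*} [CommRing R] (S : Polynomial.Sequence R) (v : Fin m → R) :
    (Matrix.of fun i j : Fin m => (S j).eval (v i)).det =
      (Matrix.vandermonde v).det * ∏ j : Fin m, (S j).leadingCoeff := by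
  have natDegree_le (j : Fin m) : (S j).natDegree ≤ j := (S.natDegree_eq j).le
  rw [Matrix.eval_matrixOfPolynomials_eq_vandermonde_mul_matrixOfPolynomials v (fun j => S j)
      natDegree_le, Matrix.det_mul,
    Matrix.det_of_isUpperTriangular (Matrix.matrixOfPolynomials_blockTriangular _ natDegree_le)]
  simp only [Matrix.of_apply, leadingCoeff, S.natDegree_eq]

theorem rank_eval_sequence {K : Type*} [Field K] (S : Polynomial.Sequence K) {v : Fin m → K}
    (hv : Function.Injective v) :
    (Matrix.of fun i j : Fin m => (S j).eval (v i)).rank = m := by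
  have det_ne_zero : (Matrix.of fun i j : Fin m => (S j).eval (v i)).det ≠ 0 := by
    rw [det_eval_sequence]
    exact mul_ne_zero (Matrix.det_vandermonde_ne_zero_iff.2 hv)
      (Finset.prod_ne_zero_iff.2 fun j _ => leadingCoeff_ne_zero.2 (S.ne_zero j))
  rw [Matrix.rank_of_isUnit _ ((Matrix.isUnit_iff_isUnit_det _).2 det_ne_zero.isUnit),
    Fintype.card_fin]

end SequenceEval

section BinaryChebyshev

theorem prod_range_pow_testBit {M : Type*} [CommMonoid M] (f : ℕ → M) {n y : ℕ}
    (hy : y < 2 ^ n) :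
    ∏ i ∈ Finset.range n, f i ^ (if y.testBit i then 1 else 0) =
      ∏ i ∈ y.bitIndices.toFinset, f i := by
  have bitIndices_eq : y.bitIndices.toFinset = {i ∈ Finset.range n | y.testBit i} := by
    ext i
    simpa using fun hi => (Nat.pow_lt_pow_iff_right one_lt_two).1
      ((Nat.ge_two_pow_of_testBit hi).trans_lt hy)
  simp only [bitIndices_eq, Finset.prod_filter, pow_ite, pow_one, pow_zero]

/-- The polynomial sequence whose `y`-th member is the product of the Chebyshev polynomials
`T_{2^i}` over the positions `i` of the binary digits `1` of `y`. Its values at `cos θ` are the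
entries of the matrix under study. -/
noncomputable def binaryChebyshev (R : Type*) [CommRing R] [IsDomain R] [NeZero (2 : R)] :
    Polynomial.Sequence R where
  elems' y := ∏ i ∈ y.bitIndices.toFinset, Chebyshev.T R (2 ^ i : ℕ)
  degree_eq' y := by
    simp only [degree_prod, Chebyshev.degree_T, Int.natAbs_natCast]
    exact_mod_cast Finset.sum_toFinset_bitIndices_two_pow y

theorem eval_cos_binaryChebyshev (y : ℕ) (θ : ℝ) :
    (binaryChebyshev ℝ y).eval (Real.cos θ) =
      ∏ i ∈ y.bitIndices.toFinset, Real.cos (2 ^ i * θ) := by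
  simp [binaryChebyshev, eval_prod]

theorem rank_prod_cos_two_pow_mul {n : ℕ} {θ : Fin (2 ^ n) → ℝ}
    (hθ : Function.Injective fun x => Real.cos (θ x)) :
    (Matrix.of fun x y : Fin (2 ^ n) =>
      ∏ i ∈ Finset.range n,
        Real.cos (2 ^ i * θ x) ^ (if (y : ℕ).testBit i then 1 else 0)).rank = 2 ^ n := by
  simp only [prod_range_pow_testBit _ (Fin.is_lt _), ← eval_cos_binaryChebyshev]
  exact rank_eval_sequence (binaryChebyshev ℝ) hθ

end BinaryChebyshev

section Angles

theorem pow_mul_div_pow_sub_one {K : Type*} [Field K] {b : K} (hb : b ≠ 0) {i m : ℕ} (hi : i < m)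
    (a : K) : b ^ i * (a / b ^ (m - 1)) = a / b ^ (m - (i + 1)) := by
  rw [show m - 1 = m - (i + 1) + i by omega, pow_add]
  field_simp

theorem injOn_cos_two_pi_mul_div (N : ℕ) :
    Set.InjOn (fun k : ℕ => Real.cos (2 * Real.pi * k / N)) (Set.Iic (N / 2)) := by
  rcases N.eq_zero_or_pos with rfl | N_pos
  · intro k hk l hl _
    simp_all
  have angle_mem : ∀ k ∈ Set.Iic (N / 2), 2 * Real.pi * k / N ∈ Set.Icc 0 Real.pi := by
    intro k hk
    have two_mul_le : (2 * k : ℝ) ≤ N := by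
      exact_mod_cast mul_comm k 2 ▸ Nat.mul_le_of_le_div _ _ _ hk
    refine ⟨by positivity, (div_le_iff₀ (by positivity)).2 ?_⟩
    calc 2 * Real.pi * k = Real.pi * (2 * k) := by ring
      _ ≤ Real.pi * N := by gcongr
  intro k hk l hl h
  have angle_eq := Real.injOn_cos (angle_mem k hk) (angle_mem l hl) h
  field_simp at angle_eq
  exact_mod_cast angle_eq

theorem le_two_pow_div_two_of_lt_two_pow {n x : ℕ} (hx : x < 2 ^ n) :
    x ≤ 2 ^ (2 * n - 1) / 2 := by
  cases n with
  | zero => simp_all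
  | succ k =>
    have half_eq : 2 ^ (2 * (k + 1) - 1) / 2 = 2 ^ k * 2 ^ k := by
      rw [← pow_add, show 2 * (k + 1) - 1 = k + k + 1 by omega, pow_succ,
        Nat.mul_div_cancel _ two_pos]
    have two_mul_le : 2 * 2 ^ k ≤ 2 ^ k * 2 ^ k + 1 := by
      simpa [sq] using two_mul_le_add_sq (2 ^ k : ℕ) 1
    rw [pow_succ] at hx
    omega

theorem injective_cos_two_pi_mul_div_two_pow (n : ℕ) :
    Function.Injective fun x : Fin (2 ^ n) =>
      Real.cos (2 * Real.pi * (x : ℕ) / 2 ^ (2 * n - 1)) := by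
  intro x y h
  exact Fin.ext <| injOn_cos_two_pi_mul_div (2 ^ (2 * n - 1))
    (le_two_pow_div_two_of_lt_two_pow x.is_lt) (le_two_pow_div_two_of_lt_two_pow y.is_lt)
    (by simpa using h)

end Angles

theorem statement4_general (n : ℕ) :
    (Matrix.of (fun x y : Fin (2 ^ n) =>
      ∏ i ∈ Finset.range n,
        (Real.cos (2 * Real.pi * (x : ℕ) / 2 ^ (2 * n - (i + 1)))) ^
          (if (y : ℕ).testBit i then 1 else 0))).rank = 2 ^ n := by
  refine Eq.trans ?_ (rank_prod_cos_two_pow_mul (injective_cos_two_pi_mul_div_two_pow n))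
  congr 1
  ext x y
  simp only [Matrix.of_apply]
  refine Finset.prod_congr rfl fun i hi => ?_
  have i_lt : i < 2 * n := by linarith [Finset.mem_range.1 hi]
  rw [pow_mul_div_pow_sub_one two_ne_zero i_lt]

/-- The `2^n × 2^n` matrix `M' x y = ∏_{i=1}^n cos(2π x / 2^{2n-i})^{y_i}`,
where `y_i` are the binary digits of `y`, has rank at least `2^{n-1}` over `ℝ`. -/
theorem statement4 (n : ℕ) (hn : 1 ≤ n) :
    2 ^ (n - 1) ≤
      (Matrix.of (fun x y : Fin (2 ^ n) =>
        ∏ i ∈ Finset.range n,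
          (Real.cos (2 * Real.pi * (x : ℕ) / 2 ^ (2 * n - (i + 1)))) ^
            (if (y : ℕ).testBit i then 1 else 0))).rank :=
  (Nat.pow_le_pow_right two_pos (n.sub_le 1)).trans_eq (statement4_general n).symm
end

section
/- Let X and Y be finite index types and A a matrix over ℂ indexed by X × Y. Then the real matrix B with entries B(x, y) = |A(x, y)|² (the squared modulus of A(x,y)) satisfies rank_ℝ(B) ≤ (rank_ℂ(A))². -/
/-!
The squared modulus is the norm of `ℂ / ℝ`, and in general the norm of a finite separable extension
`L / K` is the product of the `[L : K]` embeddings `σ` of `L` into an algebraic closure `E` of `K`.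
So over `E` the matrix of norms is the entrywise product of the conjugates `σ(A)`. Rank is unchanged
by field homomorphisms, hence each `σ(A)` has the rank of `A`, and the rank over `E` of the matrix
of norms is its rank over `K`. Finally, rank is submultiplicative under entrywise products, because
rank factorizations `A = C * R` and `B = D * S` factor the entrywise product through rows of
`C ⊗ₖ D` and columns of `R ⊗ₖ S`.
-/

open Matrix Module
open scoped Kronecker

section Rank

variable {X Y ι K L : Type*} [Field K] [Field L]

-- A relation with coefficients in `L` becomes one with coefficients in `K` under every `K`-linear
-- functional on `L`, and these functionals separate the points of `L`.
theorem linearIndependent_algebraMap_comp [Algebra K L] {v : ι → X → K}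
    (hv : LinearIndependent K v) : LinearIndependent L fun i ↦ algebraMap K L ∘ v i := by
  rw [linearIndependent_iff'] at hv ⊢
  intro s c hc i hi
  rw [← forall_dual_apply_eq_zero_iff K]
  intro φ
  refine hv s (fun j ↦ φ (c j)) (funext fun x ↦ ?_) i hi
  have hcx : ∑ j ∈ s, v j x • c j = 0 := by
    simpa [Algebra.smul_def, mul_comm] using congrFun hc x
  simpa [mul_comm] using congrArg φ hcx

variable [Fintype Y]

theorem exists_linearIndependent_col_comp (A : Matrix X Y K) :
    ∃ g : Fin A.rank → Y, LinearIndependent K (A.col ∘ g) ∧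
      Submodule.span K (Set.range (A.col ∘ g)) = Submodule.span K (Set.range A.col) := by
  rw [rank_eq_finrank_span_cols]
  have := FiniteDimensional.span_of_finite K (Set.finite_range A.col)
  obtain ⟨f, hf_mem, hf_span, hf_indep⟩ :=
    Submodule.exists_fun_fin_finrank_span_eq K (Set.range A.col)
  choose g hg using hf_mem
  obtain rfl : A.col ∘ g = f := funext hg
  exact ⟨g, hf_indep, hf_span⟩

theorem exists_eq_mul_fin_rank (A : Matrix X Y K) :
    ∃ (C : Matrix X (Fin A.rank) K) (R : Matrix (Fin A.rank) Y K), A = C * R := by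
  obtain ⟨g, -, hspan⟩ := exists_linearIndependent_col_comp A
  have hcol (y : Y) : ∃ c : Fin A.rank → K, ∑ i, c i • A.col (g i) = A.col y :=
    (Submodule.mem_span_range_iff_exists_fun K).1
      (hspan ▸ Submodule.subset_span (Set.mem_range_self y))
  choose c hc using hcol
  refine ⟨A.submatrix id g, (of c)ᵀ, ?_⟩
  ext x y
  simpa [mul_apply, mul_comm] using (congrFun (hc y) x).symm

theorem rank_map_ringHom (f : K →+* L) (A : Matrix X Y K) : (A.map f).rank = A.rank := by
  apply le_antisymm
  · obtain ⟨C, R, hA⟩ := exists_eq_mul_fin_rank A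
    calc (A.map f).rank = (C.map f * R.map f).rank := by rw [← Matrix.map_mul, ← hA]
      _ ≤ (C.map f).rank := rank_mul_le_left _ _
      _ ≤ A.rank := (rank_le_card_width _).trans_eq (Fintype.card_fin _)
  · algebraize [f]
    obtain ⟨g, hg, -⟩ := exists_linearIndependent_col_comp A
    have := FiniteDimensional.span_of_finite L (Set.finite_range (A.map f).col)
    have hg_map : LinearIndependent L ((A.map f).col ∘ g) := linearIndependent_algebraMap_comp hg
    calc A.rank = finrank L (Submodule.span L (Set.range ((A.map f).col ∘ g))) := by
          rw [finrank_span_eq_card hg_map, Fintype.card_fin]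
      _ ≤ finrank L (Submodule.span L (Set.range (A.map f).col)) :=
          Submodule.finrank_mono (Submodule.span_mono (Set.range_comp_subset_range _ _))
      _ = (A.map f).rank := (rank_eq_finrank_span_cols _).symm

theorem rank_hadamard_le (A B : Matrix X Y K) : (A ⊙ B).rank ≤ A.rank * B.rank := by
  obtain ⟨C, R, hA⟩ := exists_eq_mul_fin_rank A
  obtain ⟨D, S, hB⟩ := exists_eq_mul_fin_rank B
  have hfactor : A ⊙ B = (C ⊗ₖ D).submatrix (fun x ↦ (x, x)) id *
      (R ⊗ₖ S).submatrix id (fun y ↦ (y, y)) := by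
    rw [← submatrix_mul _ _ _ _ _ Function.bijective_id, ← mul_kronecker_mul, ← hA, ← hB]
    rfl
  rw [hfactor]
  calc _ ≤ ((C ⊗ₖ D).submatrix (fun x ↦ (x, x)) id).rank := rank_mul_le_left _ _
    _ ≤ Fintype.card (Fin A.rank × Fin B.rank) := rank_le_card_width _
    _ = A.rank * B.rank := by simp

theorem rank_of_prod_le (s : Finset ι) (A : ι → Matrix X Y K) :
    (of fun x y ↦ ∏ i ∈ s, A i x y).rank ≤ ∏ i ∈ s, (A i).rank := by
  classical
  induction s using Finset.induction_on with
  | empty => simpa [vecMulVec] using rank_vecMulVec_le (1 : X → K) (1 : Y → K)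
  | insert i s hi ih =>
    simp only [Finset.prod_insert hi]
    calc (A i ⊙ of fun x y ↦ ∏ j ∈ s, A j x y).rank
        ≤ (A i).rank * (of fun x y ↦ ∏ j ∈ s, A j x y).rank := rank_hadamard_le _ _
      _ ≤ (A i).rank * ∏ j ∈ s, (A j).rank := Nat.mul_le_mul_left _ ih

end Rank

theorem statement8_general {X Y K L : Type*} [Fintype Y] [Field K] [Field L] [Algebra K L]
    [FiniteDimensional K L] [Algebra.IsSeparable K L] (A : Matrix X Y L) :
    (A.map (Algebra.norm K)).rank ≤ A.rank ^ finrank K L := by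
  let E := AlgebraicClosure K
  have hnorm : (A.map (Algebra.norm K)).map (algebraMap K E) =
      of fun x y ↦ ∏ σ : L →ₐ[K] E, A.map σ x y := by
    ext x y
    exact Algebra.norm_eq_prod_embeddings K E (A x y)
  calc (A.map (Algebra.norm K)).rank
      = (of fun x y ↦ ∏ σ : L →ₐ[K] E, A.map σ x y).rank := by rw [← hnorm, rank_map_ringHom]
    _ ≤ ∏ σ : L →ₐ[K] E, (A.map σ).rank := rank_of_prod_le _ _
    _ = ∏ _σ : L →ₐ[K] E, A.rank := Fintype.prod_congr _ _ fun σ ↦ rank_map_ringHom σ.toRingHom A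
    _ = A.rank ^ finrank K L := by rw [Finset.prod_const, Finset.card_univ, AlgHom.card]

/-- For a complex matrix `A`, the real matrix of squared moduli
`B x y = |A x y|²` satisfies `rank_ℝ B ≤ (rank_ℂ A)²`. -/
theorem statement8 {X Y : Type*} [Fintype X] [Fintype Y] (A : Matrix X Y ℂ) :
    (Matrix.of (fun x y => Complex.normSq (A x y)) : Matrix X Y ℝ).rank ≤ A.rank ^ 2 := by
  simpa only [Matrix.map, Algebra.norm_complex_apply, Complex.finrank_real_complex] using
    statement8_general (K := ℝ) A
end

section
/- Let X and Y be finite types, R ∈ ℕ, and suppose ψ : X × Y → ℂ admits a decomposition ψ(x, y) = Σ_{i=1}^{R} α_i · u_i(x) · v_i(y) for some complex coefficients α_i and functions u_i : X → ℂ, v_i : Y → ℂ. Then the real matrix M with entries M(x, y) = |ψ(x, y)|² has rank at most R² over ℝ. -/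
/-!
Over `ℂ`, the matrix `M` is the entrywise (Hadamard) product of `ψ` with its complex conjugate.
Conjugation does not change the rank, and the rank is submultiplicative under Hadamard products,
since rank factorizations `P * Q` and `P' * Q'` with inner dimensions `r` and `s` combine to one
with inner dimension `r * s`. Finally, the rank of a real matrix is the same over `ℝ` and over `ℂ`.
-/

open scoped Matrix

section RankFactorization

variable {m n ι κ : Type*}

/-- The face-splitting product (row-wise Khatri–Rao product): each row is the Kronecker product of
the corresponding rows of the factors. It factors the Hadamard product of two matrix products. -/
def faceSplitting {R : Type*} [Mul R] (P : Matrix m ι R) (P' : Matrix m κ R) :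
    Matrix m (ι × κ) R :=
  .of fun x p => P x p.1 * P' x p.2

variable [Fintype ι] [Fintype κ]

lemma mul_hadamard_mul {R : Type*} [CommSemiring R] (P : Matrix m ι R) (Q : Matrix ι n R)
    (P' : Matrix m κ R) (Q' : Matrix κ n R) :
    (P * Q) ⊙ (P' * Q') = faceSplitting P P' * (faceSplitting Qᵀ Q'ᵀ)ᵀ := by
  ext x y
  simp only [Matrix.hadamard_apply, Matrix.mul_apply, Matrix.transpose_apply, faceSplitting,
    Matrix.of_apply, Fintype.sum_prod_type, Finset.sum_mul_sum, mul_mul_mul_comm]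

variable [Fintype n]

lemma matrix_rank_mul_le_card {R : Type*} [CommSemiring R] [StrongRankCondition R]
    (P : Matrix m ι R) (Q : Matrix ι n R) : (P * Q).rank ≤ Fintype.card ι :=
  (P.rank_mul_le_left Q).trans P.rank_le_card_width

lemma matrix_rank_le_card_of_apply_eq_sum {R : Type*} [CommSemiring R] [StrongRankCondition R]
    {A : Matrix m n R} {u : ι → m → R} {v : ι → n → R} (hA : ∀ x y, A x y = ∑ i, u i x * v i y) :
    A.rank ≤ Fintype.card ι := by
  have hA_mul : A = (Matrix.of u)ᵀ * Matrix.of v := Matrix.ext hA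
  exact hA_mul ▸ matrix_rank_mul_le_card _ _

lemma exists_eq_mul_matrix_rank {K : Type*} [Field K] (A : Matrix m n K) :
    ∃ (P : Matrix m (Fin A.rank) K) (Q : Matrix (Fin A.rank) n K), A = P * Q := by
  let colSpace := Submodule.span K (Set.range A.col)
  have finrank_colSpace : Module.finrank K colSpace = A.rank := A.rank_eq_finrank_span_cols.symm
  have : Module.Finite K colSpace := .span_of_finite K (Set.finite_range A.col)
  let b : Module.Basis (Fin A.rank) K colSpace := Module.finBasisOfFinrankEq K _ finrank_colSpace
  let col (y : n) : colSpace := ⟨A.col y, Submodule.subset_span ⟨y, rfl⟩⟩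
  refine ⟨.of fun x i => (b i : m → K) x, .of fun i y => b.repr (col y) i, ?_⟩
  ext x y
  have expand_col : ∑ i, b.repr (col y) i • (b i : m → K) = A.col y := by
    simpa only [map_sum, map_smul, Submodule.subtype_apply] using
      congrArg colSpace.subtype (b.sum_repr (col y))
  simpa [Matrix.mul_apply, mul_comm] using (congrFun expand_col x).symm

theorem matrix_rank_hadamard_le {K : Type*} [Field K] (A B : Matrix m n K) :
    (A ⊙ B).rank ≤ A.rank * B.rank := by
  obtain ⟨P, Q, hA⟩ := exists_eq_mul_matrix_rank A
  obtain ⟨P', Q', hB⟩ := exists_eq_mul_matrix_rank B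
  calc (A ⊙ B).rank = (faceSplitting P P' * (faceSplitting Qᵀ Q'ᵀ)ᵀ).rank := by
        rw [← mul_hadamard_mul, ← hA, ← hB]
    _ ≤ Fintype.card (Fin A.rank × Fin B.rank) := matrix_rank_mul_le_card _ _
    _ = A.rank * B.rank := by rw [Fintype.card_prod, Fintype.card_fin, Fintype.card_fin]

end RankFactorization

section FieldExtension

variable {m n ι K L : Type*} [Fintype n] [Field K] [Field L]

/- Applying a `K`-linear functional of `L` to the coefficients of an `L`-linear relation gives a
`K`-linear relation, and these functionals separate the points of `L`. -/
lemma linearIndependent_ringHom_comp (f : K →+* L) {v : ι → m → K} (hv : LinearIndependent K v) :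
    LinearIndependent L fun i => f ∘ v i := by
  let := f.toAlgebra
  rw [linearIndependent_iff'] at hv ⊢
  intro s c hc i hi
  refine (Module.forall_dual_apply_eq_zero_iff K (c i)).mp fun φ => ?_
  refine hv s (fun j => φ (c j)) (funext fun x => ?_) i hi
  have relation_at : ∑ j ∈ s, v j x • c j = 0 := by
    simpa [Algebra.smul_def, RingHom.algebraMap_toAlgebra, mul_comm] using congrFun hc x
  simpa [mul_comm] using congrArg φ relation_at

theorem matrix_rank_map (f : K →+* L) (A : Matrix m n K) : (A.map f).rank = A.rank := by
  apply le_antisymm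
  · obtain ⟨P, Q, hA⟩ := exists_eq_mul_matrix_rank A
    calc (A.map f).rank = (P.map f * Q.map f).rank := by rw [← Matrix.map_mul, ← hA]
      _ ≤ A.rank := by simpa using matrix_rank_mul_le_card (P.map f) (Q.map f)
  · obtain ⟨κ, a, a_injective, span_eq, hli⟩ := exists_linearIndependent' K A.col
    have : Fintype κ := .ofInjective a a_injective
    have hli_map : LinearIndependent L ((A.map f).submatrix id a).col :=
      linearIndependent_ringHom_comp f hli
    calc A.rank = Fintype.card κ := by
          rw [A.rank_eq_finrank_span_cols, ← span_eq, finrank_span_eq_card hli]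
      _ = ((A.map f).submatrix id a).rank := by
          rw [Matrix.rank_eq_finrank_span_cols, finrank_span_eq_card hli_map]
      _ ≤ (A.map f).rank := Matrix.rank_submatrix_le _ _ _

end FieldExtension

lemma map_ofReal_map_normSq {m n : Type*} (A : Matrix m n ℂ) :
    (A.map Complex.normSq).map Complex.ofRealHom = A ⊙ A.map (starRingEnd ℂ) := by
  ext x y
  exact (Complex.mul_conj (A x y)).symm

theorem statement9_general {X Y : Type*} [Fintype Y] (A : Matrix X Y ℂ) :
    (A.map Complex.normSq).rank ≤ A.rank ^ 2 :=
  calc (A.map Complex.normSq).rank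
      = (A ⊙ A.map (starRingEnd ℂ)).rank := by
        rw [← map_ofReal_map_normSq, matrix_rank_map]
    _ ≤ A.rank * (A.map (starRingEnd ℂ)).rank := matrix_rank_hadamard_le _ _
    _ = A.rank ^ 2 := by rw [matrix_rank_map, sq]

/-- If `ψ (x, y) = ∑_{i=1}^R α_i · u_i x · v_i y` (a Schmidt-rank-`R`
decomposition), then the real matrix `M x y = |ψ (x, y)|²` has rank at most `R²`. -/
theorem statement9 {X Y : Type*} [Fintype X] [Fintype Y] (R : ℕ) (ψ : X × Y → ℂ)
    (α : Fin R → ℂ) (u : Fin R → X → ℂ) (v : Fin R → Y → ℂ)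
    (hψ : ∀ x y, ψ (x, y) = ∑ i : Fin R, α i * u i x * v i y) :
    (Matrix.of (fun x y => Complex.normSq (ψ (x, y))) : Matrix X Y ℝ).rank ≤ R ^ 2 := by
  have rank_le : (Matrix.of fun x y => ψ (x, y)).rank ≤ R := by
    simpa only [Fintype.card_fin] using
      matrix_rank_le_card_of_apply_eq_sum (A := .of fun x y => ψ (x, y))
        (u := fun i x => α i * u i x) hψ
  exact (statement9_general _).trans (Nat.pow_le_pow_left rank_le 2)
end
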